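/- For every k with 1 ≤ k ≤ s+2 and every i with 1 ≤ i ≤ c_k, the binomial F_{k,i} (for k odd) and the binomial G_{k,i} (for k even) belong to the Rees ideal 𝓘 of I. -/

import Mathlib

open MvPolynomial

/-!
Evaluating at `t ↦ x^d T`, `u ↦ y^d T`, `v ↦ x^b y^c T` with `b + c = d`, the binomial
`x^a v^E - y^a t^p u^(E-p)` vanishes as soon as `d p = a + b E`: the exponents of `x` agree by
assumption, those of `y` because the total degrees agree. Such a `p` exists and is at most `E` when
`d ∣ a + b E`, `a ≤ d`, `b < d` and `E > 0`. Along the Euclidean algorithm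
`d_k ≡ (-1)^k b e_k (mod d)`, because both sides satisfy the same recurrence modulo `d` and agree at
`k = -1, 0`. Hence the intermediate remainders `a = d_{k-2} - i d_{k-1}` and coefficients
`E = i e_{k-1} + e_{k-2}` satisfy `d ∣ a + b E` for odd `k` and `d ∣ a - b E` for even `k`; the
latter is the same situation with `x, t, b` and `y, u, d - b` exchanged.
-/

section ReesIdeal

variable {A ι : Type*}

/-- The presentation `A[X_i : i ∈ ι] → A[T]`, `X_i ↦ f_i T`, of the Rees algebra of the ideal
generated by the family `f`. -/
noncomputable def reesMap [CommSemiring A] (f : ι → A) : MvPolynomial ι A →ₐ[A] Polynomial A :=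
  aeval fun i => Polynomial.C (f i) * Polynomial.X

/-- The Rees ideal of the family `f`: the relations between the elements `f_i T` of the Rees algebra
of the ideal generated by `f`. -/
noncomputable def reesIdeal [CommSemiring A] (f : ι → A) : Ideal (MvPolynomial ι A) :=
  RingHom.ker (reesMap f)

theorem reesIdeal_vecCons₃ [CommSemiring A] (f g h : A) :
    reesIdeal ![f, g, h] =
      RingHom.ker (aeval ![Polynomial.C f * Polynomial.X, Polynomial.C g * Polynomial.X,
        Polynomial.C h * Polynomial.X] : MvPolynomial (Fin 3) A →ₐ[A] Polynomial A).toRingHom := by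
  have hgens : (fun i => Polynomial.C (![f, g, h] i) * Polynomial.X) =
      ![Polynomial.C f * Polynomial.X, Polynomial.C g * Polynomial.X,
        Polynomial.C h * Polynomial.X] := by
    funext i
    fin_cases i <;> rfl
  rw [reesIdeal, reesMap, hgens]
  rfl

theorem reesMap_C_mul_X_pow_mul_X_pow [CommSemiring A] (f : ι → A) (r : A) (i j : ι) (p q : ℕ) :
    reesMap f (C r * X i ^ p * X j ^ q) =
      Polynomial.monomial (p + q) (r * f i ^ p * f j ^ q) := by
  simp only [reesMap, map_mul, map_pow, algHom_C, aeval_X, Polynomial.algebraMap_eq, mul_pow,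
    ← Polynomial.C_mul_X_pow_eq_monomial]
  ring

theorem C_mul_X_pow_sub_mem_reesIdeal_iff [CommRing A] (f : ι → A) (r s : A) (i j l : ι)
    (p q : ℕ) :
    C r * X l ^ (p + q) - C s * X i ^ p * X j ^ q ∈ reesIdeal f ↔
      r * f l ^ (p + q) = s * f i ^ p * f j ^ q := by
  rw [reesIdeal, RingHom.sub_mem_ker_iff, pow_add, ← mul_assoc, reesMap_C_mul_X_pow_mul_X_pow,
    reesMap_C_mul_X_pow_mul_X_pow, (Polynomial.monomial_injective (p + q)).eq_iff, pow_add,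
    mul_assoc r]

end ReesIdeal

section Binomials

theorem add_mul_div_le {a b d E : ℕ} (ha : a ≤ d) (hbd : b < d) (hE : 0 < E) :
    (a + b * E) / d ≤ E := by
  refine Nat.le_of_lt_succ ((Nat.div_lt_iff_lt_mul (by omega)).2 ?_)
  calc a + b * E < d + (b + 1) * E := by linarith
    _ ≤ d + d * E := by gcongr; exact hbd
    _ = (E + 1) * d := by ring

theorem pow_mul_mul_pow_eq {A : Type*} [CommMonoid A] (x y : A) {a b c d p q : ℕ}
    (hbc : b + c = d) (hp : d * p = a + b * (p + q)) :
    x ^ a * (x ^ b * y ^ c) ^ (p + q) = y ^ a * (x ^ d) ^ p * (y ^ d) ^ q := by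
  have hq : c * (p + q) = a + d * q := by
    subst hbc
    linarith
  calc x ^ a * (x ^ b * y ^ c) ^ (p + q)
      = x ^ (a + b * (p + q)) * y ^ (c * (p + q)) := by
        rw [mul_pow, ← pow_mul, ← pow_mul, pow_add, mul_assoc]
    _ = x ^ (d * p) * y ^ (a + d * q) := by rw [hp, hq]
    _ = y ^ a * (x ^ d) ^ p * (y ^ d) ^ q := by
        rw [pow_add, pow_mul, pow_mul, mul_left_comm, mul_assoc]

variable {A : Type*} [CommRing A]

/-- The binomial `F = x^a v^E - y^a t^p u^(E-p)` with `p = (a + b E) / d`, where `t, u, v` are the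
variables `X 0, X 1, X 2`. The division is meant to be exact and the subtraction `E - p` to be
untruncated. -/
noncomputable def binomialF (x y : A) (d b a E : ℕ) : MvPolynomial (Fin 3) A :=
  C (x ^ a) * X 2 ^ E - C (y ^ a) * X 0 ^ ((a + b * E) / d) * X 1 ^ (E - (a + b * E) / d)

/-- The binomial `G = y^a v^E - x^a t^(E-q) u^q` with `q = (a + (d - b) E) / d`, in the conventions
of `binomialF`. -/
noncomputable def binomialG (x y : A) (d b a E : ℕ) : MvPolynomial (Fin 3) A :=
  C (y ^ a) * X 2 ^ E -
    C (x ^ a) * X 0 ^ (E - (a + (d - b) * E) / d) * X 1 ^ ((a + (d - b) * E) / d)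

variable (x y : A) {d b a E : ℕ}

theorem binomialF_mem_reesIdeal (hbd : b < d) (ha : a ≤ d) (hE : 0 < E) (h : d ∣ a + b * E) :
    binomialF x y d b a E ∈ reesIdeal ![x ^ d, y ^ d, x ^ b * y ^ (d - b)] := by
  have hdiv : d * ((a + b * E) / d) = a + b * E := Nat.mul_div_cancel' h
  have hle : (a + b * E) / d ≤ E := add_mul_div_le ha hbd hE
  unfold binomialF
  generalize (a + b * E) / d = p at hdiv hle ⊢
  obtain ⟨q, rfl⟩ := Nat.exists_eq_add_of_le hle
  rw [Nat.add_sub_cancel_left, C_mul_X_pow_sub_mem_reesIdeal_iff]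
  exact pow_mul_mul_pow_eq x y (Nat.add_sub_of_le hbd.le) hdiv

theorem binomialG_mem_reesIdeal (hb : 0 < b) (hbd : b < d) (ha : a ≤ d) (hE : 0 < E)
    (h : d ∣ a + (d - b) * E) :
    binomialG x y d b a E ∈ reesIdeal ![x ^ d, y ^ d, x ^ b * y ^ (d - b)] := by
  have hdiv : d * ((a + (d - b) * E) / d) = a + (d - b) * E := Nat.mul_div_cancel' h
  have hle : (a + (d - b) * E) / d ≤ E := add_mul_div_le ha (by omega) hE
  unfold binomialG
  generalize (a + (d - b) * E) / d = q at hdiv hle ⊢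
  obtain ⟨p, rfl⟩ := Nat.exists_eq_add_of_le' hle
  rw [Nat.add_sub_cancel, C_mul_X_pow_sub_mem_reesIdeal_iff]
  rw [add_comm p q] at hdiv ⊢
  have hswap := pow_mul_mul_pow_eq y x (Nat.sub_add_cancel hbd.le) hdiv
  rwa [mul_comm (y ^ (d - b)), mul_right_comm] at hswap

end Binomials

/-- The recurrences of the first `n` divisions of the Euclidean algorithm on `d` and `b`, with
remainders `r`, quotients `c` and continuant coefficients `e`. The sequences `r` and `e` are shifted
by one, `r k = d_{k-1}` and `e k = e_{k-1}`, so that they start at index `0`; `c k = c_k` is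
unshifted. -/
structure EuclideanRecurrence (d b n : ℕ) (r c e : ℕ → ℕ) : Prop where
  rem_zero : r 0 = d
  rem_one : r 1 = b
  rem_rec : ∀ k, 1 ≤ k → k ≤ n → r (k - 1) = c k * r k + r (k + 1)
  coeff_zero : e 0 = 0
  coeff_one : e 1 = 1
  coeff_rec : ∀ k, 1 ≤ k → k ≤ n → e (k + 1) = c k * e k + e (k - 1)

/-- The intermediate remainder `d_{k-2} - i d_{k-1}`, in the indexing of `EuclideanRecurrence`;
meaningful for `1 ≤ k` and `i ≤ c k`. -/
def semiRem (r : ℕ → ℕ) (k i : ℕ) : ℕ := r (k - 1) - i * r k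

/-- The intermediate coefficient `i e_{k-1} + e_{k-2}`, in the indexing of `EuclideanRecurrence`;
meaningful for `1 ≤ k`. -/
def semiCoeff (e : ℕ → ℕ) (k i : ℕ) : ℕ := i * e k + e (k - 1)

namespace EuclideanRecurrence

variable {d b n : ℕ} {r c e : ℕ → ℕ}

theorem rem_le (H : EuclideanRecurrence d b n r c e) (hbd : b ≤ d) {k : ℕ} (hk : k ≤ n + 1) :
    r k ≤ d := by
  induction k using Nat.twoStepInduction with
  | zero => exact H.rem_zero.le
  | one => exact H.rem_one.trans_le hbd
  | more k ih _ =>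
    have hrec : r k = c (k + 1) * r (k + 1) + r (k + 2) :=
      H.rem_rec (k + 1) (by omega) (by omega)
    exact (Nat.le_add_left _ _).trans (hrec.symm.trans_le (ih (by omega)))

theorem coeff_add_coeff_succ_pos (H : EuclideanRecurrence d b n r c e) {k : ℕ} (hk : k ≤ n) :
    0 < e k + e (k + 1) := by
  induction k with
  | zero => simp only [H.coeff_zero, H.coeff_one, zero_add, zero_lt_one]
  | succ k ih =>
    have hrec : e (k + 1 + 1) = c (k + 1) * e (k + 1) + e k :=
      H.coeff_rec (k + 1) (by omega) hk
    have hpos : 0 < e k + e (k + 1) := ih (by omega)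
    omega

theorem dvd_rem_add_coeff (H : EuclideanRecurrence d b n r c e) {k : ℕ} (hk : k ≤ n + 1) :
    (d : ℤ) ∣ r k + (-1) ^ k * (b * e k) := by
  induction k using Nat.twoStepInduction with
  | zero => simp [H.rem_zero, H.coeff_zero]
  | one => simp [H.rem_one, H.coeff_one]
  | more k ih₀ ih₁ =>
    have hr : r k = c (k + 1) * r (k + 1) + r (k + 2) :=
      H.rem_rec (k + 1) (by omega) (by omega)
    have he : e (k + 2) = c (k + 1) * e (k + 1) + e k :=
      H.coeff_rec (k + 1) (by omega) (by omega)
    have hcomb : (r (k + 2) : ℤ) + (-1) ^ (k + 2) * (b * e (k + 2)) =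
        (r k + (-1) ^ k * (b * e k)) -
          c (k + 1) * (r (k + 1) + (-1) ^ (k + 1) * (b * e (k + 1))) := by
      rw [hr, he]
      push_cast
      ring
    rw [hcomb]
    exact (ih₀ (by omega)).sub ((ih₁ (by omega)).mul_left _)

variable {k i : ℕ}

theorem semiRem_le (H : EuclideanRecurrence d b n r c e) (hbd : b ≤ d) (hkn : k ≤ n) :
    semiRem r k i ≤ d :=
  (Nat.sub_le _ _).trans (H.rem_le hbd (by omega))

theorem semiCoeff_pos (H : EuclideanRecurrence d b n r c e) (hk : 1 ≤ k) (hkn : k ≤ n)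
    (hi : 1 ≤ i) : 0 < semiCoeff e k i := by
  obtain ⟨m, rfl⟩ := Nat.exists_eq_add_of_le' hk
  calc 0 < e m + e (m + 1) := H.coeff_add_coeff_succ_pos (by omega)
    _ = 1 * e (m + 1) + e m := by ring
    _ ≤ i * e (m + 1) + e m := by gcongr

theorem dvd_semiRem_sub_semiCoeff (H : EuclideanRecurrence d b n r c e) (hk : 1 ≤ k)
    (hkn : k ≤ n) (hic : i ≤ c k) :
    (d : ℤ) ∣ semiRem r k i - (-1) ^ k * (b * semiCoeff e k i) := by
  have hle : i * r k ≤ r (k - 1) :=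
    (Nat.mul_le_mul_right _ hic).trans (Nat.le.intro (H.rem_rec k hk hkn).symm)
  obtain ⟨m, rfl⟩ := Nat.exists_eq_add_of_le' hk
  rw [Nat.add_sub_cancel] at hle
  have hcomb : (semiRem r (m + 1) i : ℤ) - (-1) ^ (m + 1) * (b * semiCoeff e (m + 1) i) =
      (r m + (-1) ^ m * (b * e m)) - i * (r (m + 1) + (-1) ^ (m + 1) * (b * e (m + 1))) := by
    simp only [semiRem, semiCoeff, Nat.add_sub_cancel]
    push_cast [hle]
    ring
  rw [hcomb]
  exact (H.dvd_rem_add_coeff (by omega)).sub ((H.dvd_rem_add_coeff (by omega)).mul_left _)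

theorem dvd_semiRem_add_of_odd (H : EuclideanRecurrence d b n r c e) (hkn : k ≤ n)
    (hic : i ≤ c k) (hodd : Odd k) : d ∣ semiRem r k i + b * semiCoeff e k i := by
  have h := H.dvd_semiRem_sub_semiCoeff hodd.pos hkn hic
  rw [hodd.neg_one_pow, neg_one_mul, sub_neg_eq_add] at h
  exact_mod_cast h

theorem dvd_semiRem_add_of_even (H : EuclideanRecurrence d b n r c e) (hbd : b ≤ d)
    (hk : 1 ≤ k) (hkn : k ≤ n) (hic : i ≤ c k) (heven : Even k) :
    d ∣ semiRem r k i + (d - b) * semiCoeff e k i := by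
  have h := H.dvd_semiRem_sub_semiCoeff hk hkn hic
  rw [heven.neg_one_pow, one_mul] at h
  have hadd : ((semiRem r k i + (d - b) * semiCoeff e k i : ℕ) : ℤ) =
      (semiRem r k i - b * semiCoeff e k i) + d * semiCoeff e k i := by
    push_cast [hbd]
    ring
  rw [← Int.natCast_dvd_natCast, hadd]
  exact h.add (dvd_mul_right _ _)

end EuclideanRecurrence

theorem stmt7_general {A : Type*} [CommRing A] (x y : A) {d b n : ℕ} {r c e : ℕ → ℕ}
    (hb : 0 < b) (hbd : b < d) (H : EuclideanRecurrence d b n r c e) {k i : ℕ}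
    (hk : 1 ≤ k) (hkn : k ≤ n) (hi : 1 ≤ i) (hic : i ≤ c k) :
    (Odd k → binomialF x y d b (semiRem r k i) (semiCoeff e k i) ∈
      reesIdeal ![x ^ d, y ^ d, x ^ b * y ^ (d - b)]) ∧
    (Even k → binomialG x y d b (semiRem r k i) (semiCoeff e k i) ∈
      reesIdeal ![x ^ d, y ^ d, x ^ b * y ^ (d - b)]) := by
  have hrem : semiRem r k i ≤ d := H.semiRem_le hbd.le hkn
  have hcoeff : 0 < semiCoeff e k i := H.semiCoeff_pos hk hkn hi
  exact ⟨fun hodd => binomialF_mem_reesIdeal x y hbd hrem hcoeff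
      (H.dvd_semiRem_add_of_odd hkn hic hodd),
    fun heven => binomialG_mem_reesIdeal x y hb hbd hrem hcoeff
      (H.dvd_semiRem_add_of_even hbd.le hk hkn hic heven)⟩

/-- Let `I = (x^d, y^d, x^b y^{d-b}) ⊆ k[x,y]` with `gcd(d,b) = 1`,
and let `𝓘` be the Rees ideal of `I` (the kernel of `R[t,u,v] → R[T]`,
`t ↦ x^d T, u ↦ y^d T, v ↦ x^b y^{d-b} T`).  With the Euclidean data (shifted
sequences `dd m = d_{m-1}`, `ee m = e_{m-1}`), for every `1 ≤ k ≤ s+2` and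
`1 ≤ i ≤ c_k`, the binomial `F_{k,i}` (for `k` odd) and `G_{k,i}` (for `k` even)
belongs to `𝓘`. -/
theorem stmt7 {k : Type*} [Field k] (d b : ℕ) (hd : 2 ≤ d) (hb : 0 < b) (hbd : b < d)
    (hgcd : Nat.gcd d b = 1)
    (s : ℕ) (dd cc ee : ℕ → ℕ)
    (hdd0 : dd 0 = d) (hdd1 : dd 1 = b)
    (hrec : ∀ j, 1 ≤ j → j ≤ s + 2 →
      dd (j - 1) = cc j * dd j + dd (j + 1) ∧ dd (j + 1) < dd j)
    (hdds1 : dd (s + 2) = 1) (hdds2 : dd (s + 3) = 0)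
    (hee0 : ee 0 = 0) (hee1 : ee 1 = 1)
    (heerec : ∀ j, 1 ≤ j → j ≤ s + 2 → ee (j + 1) = cc j * ee j + ee (j - 1)) :
    let R := MvPolynomial (Fin 2) k
    let x : R := X 0
    let y : R := X 1
    -- the Rees map  t ↦ x^d T, u ↦ y^d T, v ↦ x^b y^{d-b} T
    let ψ : MvPolynomial (Fin 3) R →ₐ[R] Polynomial R :=
      aeval ![Polynomial.C (x ^ d) * Polynomial.X, Polynomial.C (y ^ d) * Polynomial.X,
        Polynomial.C (x ^ b * y ^ (d - b)) * Polynomial.X]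
    -- `p k i` (for `k` odd) and `q k i` (for `k` even)
    let p : ℕ → ℕ → ℕ := fun k i =>
      (dd (k - 1) - i * dd k + b * (i * ee k + ee (k - 1))) / d
    let q : ℕ → ℕ → ℕ := fun k i =>
      (dd (k - 1) - i * dd k + (d - b) * (i * ee k + ee (k - 1))) / d
    let F : ℕ → ℕ → MvPolynomial (Fin 3) R := fun k i =>
      C (x ^ (dd (k - 1) - i * dd k)) * X 2 ^ (i * ee k + ee (k - 1)) -
        C (y ^ (dd (k - 1) - i * dd k)) * X 0 ^ p k i *
          X 1 ^ (i * ee k + ee (k - 1) - p k i)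
    let G : ℕ → ℕ → MvPolynomial (Fin 3) R := fun k i =>
      C (y ^ (dd (k - 1) - i * dd k)) * X 2 ^ (i * ee k + ee (k - 1)) -
        C (x ^ (dd (k - 1) - i * dd k)) * X 0 ^ (i * ee k + ee (k - 1) - q k i) *
          X 1 ^ q k i
    ∀ j, 1 ≤ j → j ≤ s + 2 → ∀ i, 1 ≤ i → i ≤ cc j →
      (Odd j → F j i ∈ RingHom.ker ψ.toRingHom) ∧
      (Even j → G j i ∈ RingHom.ker ψ.toRingHom) := by
  intro R x y ψ p q F G j hj hjs i hi hic
  exact reesIdeal_vecCons₃ (x ^ d) (y ^ d) (x ^ b * y ^ (d - b)) ▸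
    stmt7_general x y hb hbd
      ⟨hdd0, hdd1, fun m hm hms => (hrec m hm hms).1, hee0, hee1, heerec⟩ hj hjs hi hic
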